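/- arXiv:0806.3175 — 6 statements merged into one kernel-verified Lean document; each statement's English description precedes it below -/
import Mathlib

section
/- Let G be a non-complete finite simple graph on vertex set V, and let I be an interval supergraph of G (an interval graph on V with E(G) ⊆ E(I)) having the minimum number of edges among all interval supergraphs of G. Then the complement of I has at least one edge, and box(G) ≥ |E(Ḡ)| / |E(Ī)|, where Ḡ and Ī denote the complements of G and I respectively. -/
/-!
If `G = I₁ ∩ ⋯ ∩ I_k` with `k = box(G)`, the edges of `Gᶜ` are covered by the edges of the
`I_jᶜ`. Each `I_j` is an interval supergraph of `G`, so it has at least as many edges as `I`, and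
therefore `I_jᶜ` has at most `|E(Iᶜ)|` edges. Summing over `j` gives `|E(Gᶜ)| ≤ k |E(Iᶜ)|`.

As `boxicity` is an infimum in `ℕ`, with value `0` on the empty set, one also has to know that `G`
is an intersection of finitely many interval graphs. This holds because the complete graph minus
one edge is an interval graph (`isIntervalGraph_compl_edge`), and `G` is the intersection of these
over its non-edges. The same lemma shows that `I` is not complete when `G` is not.
-/

/-- `I` is an interval graph: it can be represented by assigning to each vertex
a closed real interval so that two distinct vertices are adjacent in `I`
iff their intervals intersect. -/
def IsIntervalGraph {V : Type*} (I : SimpleGraph V) : Prop :=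
  ∃ f : V → Set ℝ, (∀ v, ∃ a b : ℝ, a ≤ b ∧ f v = Set.Icc a b) ∧
    ∀ u v : V, u ≠ v → (I.Adj u v ↔ (f u ∩ f v).Nonempty)

/-- The boxicity of `G`: the least `k` such that `G` is the intersection
(infimum) of `k` interval graphs on the same vertex set. -/
noncomputable def boxicity {V : Type*} (G : SimpleGraph V) : ℕ :=
  sInf {k : ℕ | ∃ I : Fin k → SimpleGraph V,
    (∀ i, IsIntervalGraph (I i)) ∧ G = ⨅ i, I i}

/-- The number of edges of `G`. -/
noncomputable def numEdges {V : Type*} (G : SimpleGraph V) : ℕ :=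
  G.edgeSet.ncard

/-- The complete graph minus the edge `xy` is represented by a point for `x`, a different point
for `y`, and for every other vertex the segment joining the two points. -/
theorem isIntervalGraph_compl_edge {V : Type*} {x y : V} (hxy : x ≠ y) :
    IsIntervalGraph (SimpleGraph.edge x y)ᶜ := by
  classical
  refine ⟨fun v => Set.Icc (if v = y then (1 : ℝ) else 0) (if v = x then (0 : ℝ) else 1),
    fun v => ⟨_, _, ?_, rfl⟩, fun u v huv => ?_⟩
  · split_ifs with h1 h2 <;> simp_all
  · rw [Set.Icc_inter_Icc, Set.nonempty_Icc, SimpleGraph.compl_adj, SimpleGraph.edge_adj]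
    by_cases h1 : u = x <;> by_cases h2 : u = y <;> by_cases h3 : v = x <;>
      by_cases h4 : v = y <;> simp_all [eq_comm]

theorem le_compl_edge {V : Type*} {G : SimpleGraph V} {x y : V} (h : ¬ G.Adj x y) :
    G ≤ (SimpleGraph.edge x y)ᶜ := by
  intro a b hab
  rw [SimpleGraph.compl_adj, SimpleGraph.edge_adj]
  refine ⟨hab.ne, ?_⟩
  rintro ⟨⟨rfl, rfl⟩ | ⟨rfl, rfl⟩, -⟩
  · exact h hab
  · exact h hab.symm

theorem numEdges_add_compl {V : Type*} [Fintype V] (H : SimpleGraph V) :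
    numEdges H + numEdges Hᶜ = numEdges (⊤ : SimpleGraph V) := by
  unfold numEdges
  rw [← Set.ncard_union_eq (SimpleGraph.disjoint_edgeSet.2 disjoint_compl_right)
    (Set.toFinite _) (Set.toFinite _), ← SimpleGraph.edgeSet_sup, sup_compl_eq_top]

theorem one_le_numEdges {V : Type*} [Fintype V] {H : SimpleGraph V} {x y : V}
    (h : H.Adj x y) : 1 ≤ numEdges H :=
  (Set.ncard_pos (Set.toFinite _)).2 ⟨s(x, y), h⟩

/-- On a finite vertex set the infimum defining `boxicity G` is attained. -/
theorem boxicity_spec {V : Type*} [Fintype V] (G : SimpleGraph V) :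
    ∃ I : Fin (boxicity G) → SimpleGraph V, (∀ i, IsIntervalGraph (I i)) ∧ G = ⨅ i, I i := by
  refine Nat.sInf_mem (s := {k : ℕ | ∃ I : Fin k → SimpleGraph V,
    (∀ i, IsIntervalGraph (I i)) ∧ G = ⨅ i, I i}) ?_
  let P := {p : V × V // p.1 ≠ p.2 ∧ ¬ G.Adj p.1 p.2}
  let e := Finite.equivFin P
  refine ⟨Nat.card P, fun i => (SimpleGraph.edge (e.symm i).1.1 (e.symm i).1.2)ᶜ,
    fun i => isIntervalGraph_compl_edge (e.symm i).2.1, le_antisymm ?_ ?_⟩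
  · exact le_iInf fun i => le_compl_edge (e.symm i).2.2
  · intro a b hab
    by_contra hn
    have h := iInf_le (fun i => (SimpleGraph.edge (e.symm i).1.1 (e.symm i).1.2)ᶜ)
      (e ⟨(a, b), hab.ne, hn⟩) hab
    simp [SimpleGraph.edge_adj, hab.ne] at h

theorem box_lower_bound_min_interval_supergraph {V : Type*} [Fintype V]
    (G I : SimpleGraph V) (hG : G ≠ ⊤)
    (hI : IsIntervalGraph I) (hsup : G ≤ I)
    (hmin : ∀ J : SimpleGraph V, IsIntervalGraph J → G ≤ J → numEdges I ≤ numEdges J) :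
    1 ≤ numEdges Iᶜ ∧
    (boxicity G : ℝ) ≥ (numEdges Gᶜ : ℝ) / (numEdges Iᶜ : ℝ) := by
  have hcompl : ∀ J : SimpleGraph V, IsIntervalGraph J → G ≤ J →
      numEdges Jᶜ ≤ numEdges Iᶜ := by
    intro J hJ hGJ
    have h1 := hmin J hJ hGJ
    have h2 := numEdges_add_compl I
    have h3 := numEdges_add_compl J
    omega
  have hpos : 1 ≤ numEdges Iᶜ := by
    obtain ⟨x, y, hxy, hn⟩ := SimpleGraph.ne_top_iff_exists_not_adj.1 hG
    refine le_trans ?_ (hcompl _ (isIntervalGraph_compl_edge hxy) (le_compl_edge hn))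
    rw [compl_compl]
    exact one_le_numEdges (x := x) (y := y) (by simp [SimpleGraph.edge_adj, hxy])
  refine ⟨hpos, ?_⟩
  obtain ⟨F, hF, hGF⟩ := boxicity_spec G
  have hcover : Gᶜ.edgeSet ⊆ ⋃ i, (F i)ᶜ.edgeSet := by
    intro s
    induction s with
    | _ a b =>
      intro hab
      by_contra hn
      simp only [Set.mem_iUnion, SimpleGraph.mem_edgeSet, SimpleGraph.compl_adj, not_exists,
        not_and, not_not] at hab hn
      refine hab.2 ?_
      rw [hGF, SimpleGraph.iInf_adj]
      exact ⟨fun i => hn i hab.1, hab.1⟩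
  have hle : numEdges Gᶜ ≤ boxicity G * numEdges Iᶜ := by
    calc numEdges Gᶜ ≤ (⋃ i, (F i)ᶜ.edgeSet).ncard := Set.ncard_le_ncard hcover (Set.toFinite _)
      _ ≤ ∑ i, numEdges (F i)ᶜ := Set.ncard_iUnion_le_of_fintype _
      _ ≤ ∑ _i : Fin (boxicity G), numEdges Iᶜ :=
        Finset.sum_le_sum fun i _ => hcompl _ (hF i) (hGF.trans_le (iInf_le F i))
      _ = boxicity G * numEdges Iᶜ := by simp
  rw [ge_iff_le, div_le_iff₀ (by exact_mod_cast hpos)]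
  exact_mod_cast hle
end

section
/- Let k ≥ 1 be an integer and let G be an (n−k−1)-regular graph on n vertices (so 1 ≤ k ≤ n−1). Then box(G) ≥ n/(2k). -/
open Finset in
/-- If every interval `[l u, r u]` is disjoint from at most `k` others, then at most `k * k` ordered
pairs `(u, v)` have the interval of `u` strictly to the left of that of `v`. -/
lemma card_leftOf_le {V : Type*} [Fintype V] (l r : V → ℝ) (k : ℕ)
    (h : ∀ u, #{v | r u < l v ∨ r v < l u} ≤ k) :
    #{p : V × V | r p.1 < l p.2} ≤ k * k := by
  classical
  rcases isEmpty_or_nonempty V with hV | hV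
  · simp
  obtain ⟨u₀, hu₀⟩ := Finite.exists_min r
  have hS : #{v | r u₀ < l v} ≤ k :=
    (card_le_card (monotone_filter_right _ fun v _ hv => Or.inl hv)).trans (h u₀)
  refine (card_le_mul_card_image_of_maps_to (f := Prod.snd) (t := ({v | r u₀ < l v} : Finset V))
    ?_ k ?_).trans (Nat.mul_le_mul_left k hS)
  · intro p hp
    simp only [mem_filter, mem_univ, true_and] at hp ⊢
    exact (hu₀ p.1).trans_lt hp
  · intro v _
    refine (card_le_card_of_injOn Prod.fst ?_ ?_).trans (h v)
    · rintro ⟨a, b⟩ hp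
      simp only [coe_filter, mem_filter, mem_univ, true_and, Set.mem_ofPred_eq] at hp ⊢
      obtain ⟨h1, rfl⟩ := hp
      exact Or.inr h1
    · rintro ⟨a, b⟩ hp ⟨c, d⟩ hq hac
      simp only [coe_filter, mem_filter, mem_univ, true_and, Set.mem_ofPred_eq] at hp hq hac
      rw [hac, hp.2, hq.2]

/-- The graph in which the only non-adjacent pairs of distinct vertices are those formed by `w` and
a non-neighbour of `w` in `G`. -/
def starGraphAt {V : Type*} (G : SimpleGraph V) (w : V) : SimpleGraph V where
  Adj u v := u ≠ v ∧ (u = w → G.Adj w v) ∧ (v = w → G.Adj w u)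
  symm := ⟨fun _ _ h => ⟨h.1.symm, h.2.2, h.2.1⟩⟩
  loopless := ⟨fun _ h => h.1 rfl⟩

lemma isIntervalGraph_starGraphAt {V : Type*} (G : SimpleGraph V) (w : V) :
    IsIntervalGraph (starGraphAt G w) := by
  classical
  -- `w` gets `[0, 0]`, its neighbours get `[0, 1]`, its non-neighbours `[1, 1]`.
  refine ⟨fun v => Set.Icc (if v = w ∨ G.Adj w v then 0 else 1) (if v = w then 0 else 1), ?_, ?_⟩
  · intro v
    refine ⟨_, _, ?_, rfl⟩
    by_cases h1 : v = w <;> by_cases h2 : G.Adj w v <;> simp [h1, h2]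
  · intro u v huv
    simp only [Set.Icc_inter_Icc, Set.nonempty_Icc, starGraphAt]
    by_cases h1 : u = w
    · subst h1
      by_cases h2 : G.Adj u v <;> simp [h2, huv, huv.symm]
    · by_cases h3 : v = w
      · subst h3
        by_cases h2 : G.Adj v u <;> simp [h2, huv]
      · by_cases h2 : G.Adj w u <;> by_cases h4 : G.Adj w v <;> simp [h1, h2, h3, h4, huv]

lemma exists_interval_representation {V : Type*} [Fintype V] (G : SimpleGraph V) :
    {k : ℕ | ∃ I : Fin k → SimpleGraph V,
      (∀ i, IsIntervalGraph (I i)) ∧ G = ⨅ i, I i}.Nonempty := by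
  refine ⟨Fintype.card V, fun i => starGraphAt G ((Fintype.equivFin V).symm i),
    fun i => isIntervalGraph_starGraphAt G _, ?_⟩
  rw [(Fintype.equivFin V).symm.iInf_comp (g := starGraphAt G)]
  ext u v
  simp only [SimpleGraph.iInf_adj, starGraphAt]
  constructor
  · exact fun h => ⟨fun w => ⟨h.ne, fun e => e ▸ h, fun e => e ▸ h.symm⟩, h.ne⟩
  · exact fun h => (h.1 u).2.1 rfl

open Finset in
/-- Double counting of non-adjacent ordered pairs: in an intersection of `t` interval graphs in
which every vertex has exactly `k` non-neighbours, `n * k ≤ t * (2 * k ^ 2)`. -/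
lemma card_mul_le_of_representation {V : Type*} [Fintype V] (G : SimpleGraph V)
    (k t : ℕ) (I : Fin t → SimpleGraph V) (hI : ∀ i, IsIntervalGraph (I i)) (hG : G = ⨅ i, I i)
    [DecidableRel Gᶜ.Adj] (hk : ∀ u, #{v | Gᶜ.Adj u v} = k) :
    Fintype.card V * k ≤ t * (k * k + k * k) := by
  classical
  choose f hf hadj using hI
  choose l r hlr hflr using hf
  have hsep : ∀ i u v, u ≠ v → (¬ (I i).Adj u v ↔ r i u < l i v ∨ r i v < l i u) := by
    intro i u v huv
    have h1 := hlr i u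
    have h2 := hlr i v
    rw [hadj i u v huv, hflr, hflr, Set.Icc_inter_Icc, Set.nonempty_Icc, sup_le_iff, le_inf_iff,
      le_inf_iff]
    grind
  have hbound : ∀ i u, #{v | r i u < l i v ∨ r i v < l i u} ≤ k := by
    intro i u
    rw [← hk u]
    refine card_le_card (monotone_filter_right _ fun v _ hv => ?_)
    have huv : u ≠ v := by
      rintro rfl
      have := hlr i u
      rcases hv with hv | hv <;> linarith
    refine (SimpleGraph.compl_adj _ _ _).2 ⟨huv, fun h => (hsep i u v huv).2 hv ?_⟩
    rw [hG, SimpleGraph.iInf_adj] at h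
    exact h.1 i
  have hcount : #{p : V × V | Gᶜ.Adj p.1 p.2} = Fintype.card V * k := by
    rw [card_filter, Fintype.sum_prod_type]
    simp only [← card_filter, hk, sum_const, card_univ, smul_eq_mul]
  rw [← hcount]
  calc #{p : V × V | Gᶜ.Adj p.1 p.2}
      ≤ #((univ : Finset (Fin t)).biUnion fun i =>
          (univ.filter fun p : V × V => r i p.1 < l i p.2) ∪
            univ.filter fun p : V × V => r i p.2 < l i p.1) := by
        refine card_le_card fun p hp => ?_
        simp only [mem_filter, mem_univ, true_and, SimpleGraph.compl_adj] at hp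
        obtain ⟨hne, hna⟩ := hp
        rw [hG, SimpleGraph.iInf_adj] at hna
        have : ∃ i, ¬ (I i).Adj p.1 p.2 := by
          by_contra! hall
          exact hna ⟨hall, hne⟩
        obtain ⟨i, hi⟩ := this
        simpa using ⟨i, (hsep i _ _ hne).1 hi⟩
    _ ≤ #(univ : Finset (Fin t)) * (k * k + k * k) := by
        refine card_biUnion_le_card_mul _ _ _ fun i _ => (card_union_le _ _).trans ?_
        refine Nat.add_le_add (card_leftOf_le _ _ k (hbound i)) ?_
        refine le_trans (card_le_card_of_injOn Prod.swap ?_ Prod.swap_injective.injOn)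
          (card_leftOf_le _ _ k (hbound i))
        intro p hp
        simpa using hp
    _ = t * (k * k + k * k) := by simp

theorem box_lower_bound_regular {V : Type*} [Fintype V]
    (G : SimpleGraph V) [DecidableRel G.Adj] (n k : ℕ)
    (hn : Fintype.card V = n) (hk1 : 1 ≤ k) (hk2 : k ≤ n - 1)
    (hreg : G.IsRegularOfDegree (n - k - 1)) :
    (boxicity G : ℝ) ≥ (n : ℝ) / (2 * k) := by
  classical
  obtain ⟨I, hI, hG⟩ := Nat.sInf_mem (exists_interval_representation G)
  have hk : ∀ u, (Finset.univ.filter fun v => Gᶜ.Adj u v).card = k := by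
    intro u
    have h1 := G.degree_compl u
    rw [hreg u, hn] at h1
    rw [← SimpleGraph.neighborFinset_eq_filter, SimpleGraph.card_neighborFinset_eq_degree, h1]
    omega
  have key := card_mul_le_of_representation G k _ I hI hG hk
  rw [hn] at key
  change n * k ≤ boxicity G * (k * k + k * k) at key
  have key' : n ≤ boxicity G * (2 * k) := by
    refine Nat.le_of_mul_le_mul_right (c := k) ?_ hk1
    linarith
  have hkpos : (0 : ℝ) < 2 * k := by positivity
  rw [ge_iff_le, div_le_iff₀ hkpos]
  exact_mod_cast key'
end

section
/- For every integer n ≥ 5, the complement of the cycle C_n on n vertices satisfies box(C̄_n) ≥ n/3. -/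
/-- The graph in which the non-neighbours of `v` are exactly those of `v` in `G`, and all pairs of
vertices other than `v` are adjacent. -/
def starGraph {V : Type*} (G : SimpleGraph V) (v : V) : SimpleGraph V where
  Adj x y := x ≠ y ∧ (x = v → G.Adj v y) ∧ (y = v → G.Adj v x)
  symm := ⟨fun _ _ h => ⟨h.1.symm, h.2.2, h.2.1⟩⟩
  loopless := ⟨fun _ h => h.1 rfl⟩

/-- The vertex `v` is represented by `[0, 0]`, its neighbours by `[0, 1]`, all others by
`[1, 1]`. -/
lemma isIntervalGraph_starGraph {V : Type*} (G : SimpleGraph V) (v : V) :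
    IsIntervalGraph (starGraph G v) := by
  classical
  refine ⟨fun x => Set.Icc (if x = v ∨ G.Adj v x then 0 else 1) (if x = v then 0 else 1),
    fun x => ⟨_, _, ?_, rfl⟩, fun x y hxy => ?_⟩
  · by_cases h : x = v <;> by_cases h' : G.Adj v x <;> simp [h, h']
  · rw [Set.Icc_inter_Icc, Set.nonempty_Icc]
    by_cases hx : x = v
    · subst hx
      by_cases h' : G.Adj x y <;> simp [starGraph, hxy, hxy.symm, h']
    · by_cases hy : y = v
      · subst hy
        by_cases h' : G.Adj y x <;> simp [starGraph, hxy, h']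
      · by_cases h' : G.Adj v x <;> by_cases h'' : G.Adj v y <;>
          simp [starGraph, hxy, hx, hy, h', h'']

lemma eq_iInf_starGraph {V : Type*} (G : SimpleGraph V) : G = ⨅ v, starGraph G v := by
  ext x y
  rw [SimpleGraph.iInf_adj]
  constructor
  · intro h
    exact ⟨fun v => ⟨h.ne, fun e => e ▸ h, fun e => e ▸ h.symm⟩, h.ne⟩
  · intro h
    exact (h.1 x).2.1 rfl

/-- When `4 ≠ 0`, four distinct elements cannot be two-coloured so that elements of equal colour differ by `± 2`
and elements of different colours differ by `± 1`. -/
lemma no_four {R : Type*} [CommRing R] (h4 : (4 : R) ≠ 0) (U D : R → Prop)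
    (hU : ∀ i j, U i → U j → i ≠ j → j = i + 2 ∨ i = j + 2)
    (hD : ∀ i j, D i → D j → i ≠ j → j = i + 2 ∨ i = j + 2)
    (hUD : ∀ i j, U i → D j → j = i + 1 ∨ i = j + 1)
    (a b c d : R) (ha : U a ∨ D a) (hb : U b ∨ D b) (hc : U c ∨ D c) (hd : U d ∨ D d)
    (hab : a ≠ b) (hac : a ≠ c) (had : a ≠ d) (hbc : b ≠ c) (hbd : b ≠ d) (hcd : c ≠ d) :
    False := by
  have four : ∀ a b c d : R, a ≠ b → a ≠ c → a ≠ d → b ≠ c → b ≠ d → c ≠ d →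
      (b = a + 2 ∨ a = b + 2) → (c = a + 2 ∨ a = c + 2) → (d = a + 2 ∨ a = d + 2) → False := by
    intro a b c d _ _ _ _ _ _ p q r
    rcases p with p | p <;> rcases q with q | q <;> rcases r with r | r <;> grind
  have three : ∀ a b c d : R, a ≠ b → a ≠ c → b ≠ c →
      (b = a + 2 ∨ a = b + 2) → (c = a + 2 ∨ a = c + 2) →
      (d = a + 1 ∨ a = d + 1) → (d = b + 1 ∨ b = d + 1) → (d = c + 1 ∨ c = d + 1) → False := by
    intro a b c d _ _ _ p q r s t
    rcases p with p | p <;> rcases q with q | q <;> rcases r with r | r <;>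
      rcases s with s | s <;> rcases t with t | t <;> grind
  have two : ∀ a b c d : R, a ≠ b → c ≠ d → (b = a + 2 ∨ a = b + 2) →
      (c = a + 1 ∨ a = c + 1) → (c = b + 1 ∨ b = c + 1) →
      (d = a + 1 ∨ a = d + 1) → (d = b + 1 ∨ b = d + 1) → False := by
    intro a b c d _ _ p q r s t
    rcases p with p | p <;> rcases q with q | q <;> rcases r with r | r <;>
      rcases s with s | s <;> rcases t with t | t <;> grind
  have hDU : ∀ i j, D i → U j → j = i + 1 ∨ i = j + 1 := fun i j hi hj => (hUD j i hj hi).symm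
  rcases ha with ha | ha <;> rcases hb with hb | hb <;> rcases hc with hc | hc <;>
    rcases hd with hd | hd
  · exact four a b c d hab hac had hbc hbd hcd (hU _ _ ha hb hab) (hU _ _ ha hc hac)
      (hU _ _ ha hd had)
  · exact three a b c d hab hac hbc (hU _ _ ha hb hab) (hU _ _ ha hc hac)
      (hUD _ _ ha hd) (hUD _ _ hb hd) (hUD _ _ hc hd)
  · exact three a b d c hab had hbd (hU _ _ ha hb hab) (hU _ _ ha hd had)
      (hUD _ _ ha hc) (hUD _ _ hb hc) (hUD _ _ hd hc)
  · exact two a b c d hab hcd (hU _ _ ha hb hab) (hUD _ _ ha hc) (hUD _ _ hb hc)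
      (hUD _ _ ha hd) (hUD _ _ hb hd)
  · exact three a c d b hac had hcd (hU _ _ ha hc hac) (hU _ _ ha hd had)
      (hUD _ _ ha hb) (hUD _ _ hc hb) (hUD _ _ hd hb)
  · exact two a c b d hac hbd (hU _ _ ha hc hac) (hUD _ _ ha hb) (hUD _ _ hc hb)
      (hUD _ _ ha hd) (hUD _ _ hc hd)
  · exact two a d b c had hbc (hU _ _ ha hd had) (hUD _ _ ha hb) (hUD _ _ hd hb)
      (hUD _ _ ha hc) (hUD _ _ hd hc)
  · exact three b c d a hbc hbd hcd (hD _ _ hb hc hbc) (hD _ _ hb hd hbd)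
      (hDU _ _ hb ha) (hDU _ _ hc ha) (hDU _ _ hd ha)
  · exact three b c d a hbc hbd hcd (hU _ _ hb hc hbc) (hU _ _ hb hd hbd)
      (hUD _ _ hb ha) (hUD _ _ hc ha) (hUD _ _ hd ha)
  · exact two a d b c had hbc (hD _ _ ha hd had) (hDU _ _ ha hb) (hDU _ _ hd hb)
      (hDU _ _ ha hc) (hDU _ _ hd hc)
  · exact two a c b d hac hbd (hD _ _ ha hc hac) (hDU _ _ ha hb) (hDU _ _ hc hb)
      (hDU _ _ ha hd) (hDU _ _ hc hd)
  · exact three a c d b hac had hcd (hD _ _ ha hc hac) (hD _ _ ha hd had)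
      (hDU _ _ ha hb) (hDU _ _ hc hb) (hDU _ _ hd hb)
  · exact two a b c d hab hcd (hD _ _ ha hb hab) (hDU _ _ ha hc) (hDU _ _ hb hc)
      (hDU _ _ ha hd) (hDU _ _ hb hd)
  · exact three a b d c hab had hbd (hD _ _ ha hb hab) (hD _ _ ha hd had)
      (hDU _ _ ha hc) (hDU _ _ hb hc) (hDU _ _ hd hc)
  · exact three a b c d hab hac hbc (hD _ _ ha hb hab) (hD _ _ ha hc hac)
      (hDU _ _ ha hd) (hDU _ _ hb hd) (hDU _ _ hc hd)
  · exact four a b c d hab hac had hbc hbd hcd (hD _ _ ha hb hab) (hD _ _ ha hc hac)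
      (hD _ _ ha hd had)

open Fin.CommRing in
/-- An interval graph containing the complement of a cycle of length at least `5` misses at most
three edges of the cycle. -/
lemma card_missing_le_three (m : ℕ) (I : SimpleGraph (Fin (m + 5))) (hI : IsIntervalGraph I)
    (hle : (SimpleGraph.cycleGraph (m + 5))ᶜ ≤ I) (S : Finset (Fin (m + 5)))
    (hS : ∀ i ∈ S, ¬ I.Adj i (i + 1)) : S.card ≤ 3 := by
  obtain ⟨f, hf, hadj⟩ := hI
  choose l r hlr hfe using hf
  have key : ∀ u v, u ≠ v → (¬ I.Adj u v ↔ r u < l v ∨ r v < l u) := by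
    intro u v huv
    rw [hadj u v huv, hfe, hfe, Set.Icc_inter_Icc, Set.nonempty_Icc]
    have := hlr u
    have := hlr v
    simp only [sup_le_iff, le_inf_iff]
    grind
  have lt_adj : ∀ u v, r u < l v → v = u + 1 ∨ u = v + 1 := by
    intro u v h
    have huv : u ≠ v := by
      rintro rfl
      exact absurd (hlr u) (not_le.mpr h)
    have h1 := (key u v huv).2 (Or.inl h)
    have h2 : (SimpleGraph.cycleGraph (m + 5)).Adj u v := by
      by_contra h3
      exact h1 (hle ((SimpleGraph.compl_adj _ _ _).2 ⟨huv, h3⟩))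
    rw [SimpleGraph.cycleGraph_adj] at h2
    grind
  have two_two : ∀ u v x y, r u < l v → r x < l y → r u < l y ∨ r x < l v := by
    intro u v x y h h'
    by_contra! h''
    linarith
  have h1 : (1 : Fin (m + 5)) ≠ 0 := by simp
  have h4 : (4 : Fin (m + 5)) ≠ 0 := by
    rw [Ne, Fin.ext_iff]; exact (by simp [Nat.mod_eq_of_lt] : ((4 % (m + 5) : ℕ)) ≠ 0)
  have hmem : ∀ i ∈ S, r i < l (i + 1) ∨ r (i + 1) < l i := fun i hi =>
    (key i (i + 1) (by simp)).1 (hS i hi)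
  by_contra! hcard
  obtain ⟨a, ha⟩ : S.Nonempty := Finset.card_pos.1 (by omega)
  have h' : 2 < (S.erase a).card := by rw [Finset.card_erase_of_mem ha]; omega
  obtain ⟨b, c, d, hb, hc, hd, hbc, hbd, hcd⟩ := Finset.two_lt_card_iff.1 h'
  rw [Finset.mem_erase] at hb hc hd
  refine no_four h4 (fun i => r i < l (i + 1)) (fun i => r (i + 1) < l i)
    ?_ ?_ ?_ a b c d (hmem a ha) (hmem b hb.2) (hmem c hc.2) (hmem d hd.2)
    hb.1.symm hc.1.symm hd.1.symm hbc hbd hcd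
  · intro i j hi hj hij
    rcases two_two _ _ _ _ hi hj with h | h <;> rcases lt_adj _ _ h with h | h <;> grind
  · intro i j hi hj hij
    rcases two_two _ _ _ _ hi hj with h | h <;> rcases lt_adj _ _ h with h | h <;> grind
  · intro i j hi hj
    rcases two_two _ _ _ _ hi hj with h | h <;> rcases lt_adj _ _ h with h | h <;> grind

theorem box_complement_cycle (n : ℕ) (hn : 5 ≤ n) :
    (boxicity (SimpleGraph.cycleGraph n)ᶜ : ℝ) ≥ (n : ℝ) / 3 := by
  obtain ⟨m, rfl⟩ := Nat.exists_eq_add_of_le' hn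
  set G := (SimpleGraph.cycleGraph (m + 5))ᶜ with hG
  have hne : {k : ℕ | ∃ I : Fin k → SimpleGraph (Fin (m + 5)),
      (∀ i, IsIntervalGraph (I i)) ∧ G = ⨅ i, I i}.Nonempty :=
    ⟨m + 5, starGraph G, isIntervalGraph_starGraph G, eq_iInf_starGraph G⟩
  obtain ⟨I, hI, hGI⟩ : ∃ I : Fin (boxicity G) → SimpleGraph (Fin (m + 5)),
      (∀ i, IsIntervalGraph (I i)) ∧ G = ⨅ i, I i := Nat.sInf_mem hne
  have hmiss : ∀ i : Fin (m + 5), ∃ j, ¬ (I j).Adj i (i + 1) := by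
    intro i
    by_contra! h
    have h1 : G.Adj i (i + 1) := by
      rw [hGI, SimpleGraph.iInf_adj]
      exact ⟨h, by simp⟩
    rw [hG, SimpleGraph.compl_adj, SimpleGraph.cycleGraph_adj] at h1
    exact h1.2 (Or.inr (by simp))
  choose c hc using hmiss
  have hcard : (Finset.univ : Finset (Fin (m + 5))).card ≤
      3 * (Finset.univ : Finset (Fin (boxicity G))).card := by
    refine Finset.card_le_mul_card_image_of_maps_to (f := c) (fun _ _ => Finset.mem_univ _) 3 ?_
    intro j _
    refine card_missing_le_three m (I j) (hI j) ?_ _ ?_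
    · rw [← hG, hGI]
      exact iInf_le I j
    · intro i hi
      obtain rfl := (Finset.mem_filter.1 hi).2
      exact hc i
  simp only [Finset.card_univ, Fintype.card_fin] at hcard
  have : ((m + 5 : ℕ) : ℝ) ≤ 3 * (boxicity G : ℝ) := by exact_mod_cast hcard
  linarith
end

section
/- Let G be a graph on n vertices, let i be a positive integer with i ≤ n and let j be a non-negative integer. If c_v(i, G) = j, then for every integer k with j < k ≤ n one has c_v(k, G) < i. -/
/-!
The argument is the symmetry of complete bipartite pairs: if `Y ⊆ S(X, G)` then `X ⊆ S(Y, G)`.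
If `cv G k ≥ i`, take `X` of size `k` attaining the maximum and `Y ⊆ S(X, G)` of size `i`;
then `|S(Y, G)| ≥ |X| = k > j`, contradicting `cv G i = j`.
-/

/-- `cv G k` = maximum size of the strong vertex boundary `S(X,G)` over all
vertex sets `X` of size `k`. -/
noncomputable def cv {V : Type*} [Fintype V] (G : SimpleGraph V) (k : ℕ) : ℕ :=
  sSup {m : ℕ | ∃ X : Finset V, X.card = k ∧
    ({u : V | u ∉ X ∧ ∀ v ∈ X, G.Adj u v}).ncard = m}

theorem ncard_le_cv {V : Type*} [Fintype V] (G : SimpleGraph V) (X : Finset V) :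
    ({u : V | u ∉ X ∧ ∀ v ∈ X, G.Adj u v}).ncard ≤ cv G X.card := by
  refine le_csSup ⟨Nat.card V, ?_⟩ ⟨X, rfl, rfl⟩
  rintro m ⟨Z, -, rfl⟩
  exact Set.ncard_le_card _

theorem cv_lt_of_cv_eq {V : Type*} [Fintype V] (G : SimpleGraph V) (i j k : ℕ)
    (hi1 : 1 ≤ i) (hi2 : i ≤ Fintype.card V) (hcv : cv G i = j)
    (hk1 : j < k) (hk2 : k ≤ Fintype.card V) :
    cv G k < i := by
  by_contra! h
  have hne : {m : ℕ | ∃ X : Finset V, X.card = k ∧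
      ({u : V | u ∉ X ∧ ∀ v ∈ X, G.Adj u v}).ncard = m}.Nonempty := by
    obtain ⟨X, -, hX⟩ := Finset.exists_subset_card_eq (s := (Finset.univ : Finset V)) hk2
    exact ⟨_, X, hX, rfl⟩
  have hbdd : BddAbove {m : ℕ | ∃ X : Finset V, X.card = k ∧
      ({u : V | u ∉ X ∧ ∀ v ∈ X, G.Adj u v}).ncard = m} := by
    refine ⟨Nat.card V, ?_⟩
    rintro m ⟨Z, -, rfl⟩
    exact Set.ncard_le_card _
  obtain ⟨X, hXk, hX⟩ := Nat.sSup_mem hne hbdd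
  change _ = cv G k at hX
  obtain ⟨T, hTS, hTi⟩ := Set.exists_subset_card_eq (hX ▸ h)
  obtain ⟨Y, rfl⟩ := T.toFinite.exists_finset_coe
  rw [Set.ncard_coe_finset] at hTi
  have hXY : (X : Set V) ⊆ {u : V | u ∉ Y ∧ ∀ v ∈ Y, G.Adj u v} := fun x hx =>
    ⟨fun hxY => (hTS hxY).1 hx, fun y hy => ((hTS hy).2 x hx).symm⟩
  have h1 := Set.ncard_le_ncard hXY (Set.toFinite _)
  have h2 := ncard_le_cv G Y
  rw [Set.ncard_coe_finset] at h1
  rw [hTi] at h2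
  omega
end

section
/- Let G be a connected k-regular graph on n ≥ 2 vertices. List the eigenvalues (with multiplicity) of the adjacency matrix of G as λ₁ ≥ λ₂ ≥ ⋯ ≥ λₙ (so λ₁ = k), and let λ = max_{2 ≤ i ≤ n} |λ_i| be the second largest eigenvalue in absolute value (λ > 0 for such G). Then box(G) ≥ ((k²/λ²) / log(1 + k²/λ²)) · ((n − k − 1)/(2n)), where log is the natural logarithm. -/
section Auxiliary

open Matrix Finset

/-! ### The spectral gap -/

/-- Any antitone enumeration of the roots of the characteristic polynomial agrees with Mathlib's
eigenvalues up to a bijection of the index types, since both sort to the same list. -/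
theorem eigenvalues_eq_sorted {V : Type*} [Fintype V] [DecidableEq V] {A : Matrix V V ℝ}
    (hA : A.IsHermitian) {n : ℕ} (hn : Fintype.card V = n) {μ : Fin n → ℝ} (hsort : Antitone μ)
    (hchar : A.charpoly = ∏ i : Fin n, (Polynomial.X - Polynomial.C (μ i))) :
    ∃ σ : V ≃ Fin n, ∀ v, hA.eigenvalues v = μ (σ v) := by
  subst hn
  have hroots : A.charpoly.roots = Multiset.map μ Finset.univ.val := by
    rw [hchar, Polynomial.roots_prod _ _
      (Finset.prod_ne_zero_iff.2 fun i _ => Polynomial.X_sub_C_ne_zero _)]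
    simp
  have h : List.ofFn hA.eigenvalues₀ = List.ofFn μ := by
    rw [← hA.sort_roots_charpoly_eq_eigenvalues₀, hroots]
    simp_rw [Fin.univ_val_map, Multiset.map_coe, List.map_ofFn, Function.comp_def, RCLike.re_to_real,
      Multiset.coe_sort]
    apply List.mergeSort_of_pairwise
    simp_rw [decide_eq_true_eq, ← List.sortedGE_iff_pairwise]
    exact hsort.sortedGE_ofFn
  have h' := List.ofFn_inj.1 h
  exact ⟨(Fintype.equivOfCardEq (Fintype.card_fin _)).symm, fun v => by
    rw [← h']; rfl⟩

section
variable {V : Type*} [Fintype V] [DecidableEq V] (G : SimpleGraph V) [DecidableRel G.Adj] {k : ℕ}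

/-- Gershgorin's theorem: the diagonal vanishes and every row has absolute sum `k`. -/
theorem abs_eigenvalues_le (hreg : G.IsRegularOfDegree k) (hA : (G.adjMatrix ℝ).IsHermitian)
    (j : V) : |hA.eigenvalues j| ≤ k := by
  have hev : Module.End.HasEigenvalue (Matrix.toLin' (G.adjMatrix ℝ)) (hA.eigenvalues j) := by
    refine Module.End.hasEigenvalue_of_hasEigenvector (x := ⇑(hA.eigenvectorBasis j)) ⟨?_, ?_⟩
    · rw [Module.End.mem_eigenspace_iff, Matrix.toLin'_apply, hA.mulVec_eigenvectorBasis]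
    · intro h
      exact hA.eigenvectorBasis.orthonormal.ne_zero j (by ext v; exact congrFun h v)
  obtain ⟨v, hv⟩ := eigenvalue_mem_ball hev
  rw [Metric.mem_closedBall, Real.dist_eq, SimpleGraph.adjMatrix_apply, if_neg (G.loopless.irrefl v),
    sub_zero] at hv
  refine hv.trans ?_
  calc ∑ w ∈ univ.erase v, ‖G.adjMatrix ℝ v w‖ ≤ ∑ w, ‖G.adjMatrix ℝ v w‖ :=
        sum_le_sum_of_subset_of_nonneg (erase_subset _ _) fun _ _ _ => norm_nonneg _
    _ = k := by
        have : ∀ w, ‖G.adjMatrix ℝ v w‖ = if G.Adj v w then 1 else 0 := by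
          intro w; rw [SimpleGraph.adjMatrix_apply]; split_ifs <;> simp
        simp_rw [this]
        rw [sum_boole, ← hreg v, ← G.card_neighborFinset_eq_degree]
        congr 2; ext w; simp

omit [DecidableEq V] in
theorem sum_mulVec (hreg : G.IsRegularOfDegree k) (x : V → ℝ) :
    ∑ v, (G.adjMatrix ℝ *ᵥ x) v = k * ∑ v, x v := by
  have h := Matrix.dotProduct_mulVec (fun _ => (1 : ℝ)) (G.adjMatrix ℝ) x
  have h1 : (fun _ => (1 : ℝ)) ᵥ* G.adjMatrix ℝ = fun _ => (k : ℝ) := by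
    ext v; simp [hreg v]
  rw [h1] at h
  simpa [dotProduct, mul_sum] using h

/-- An eigenvector for an eigenvalue other than `k` is orthogonal to the all-ones vector, which is an
eigenvector for `k`. -/
theorem sum_eigenvector_eq_zero (hreg : G.IsRegularOfDegree k)
    (hA : (G.adjMatrix ℝ).IsHermitian) {j : V} (hj : hA.eigenvalues j ≠ k) :
    ∑ v, hA.eigenvectorBasis j v = 0 := by
  have h := sum_mulVec G hreg (⇑(hA.eigenvectorBasis j))
  rw [hA.mulVec_eigenvectorBasis] at h
  simp only [Pi.smul_apply, smul_eq_mul, ← mul_sum] at h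
  have : (hA.eigenvalues j - k) * ∑ v, hA.eigenvectorBasis j v = 0 := by linarith
  exact (mul_eq_zero.1 this).resolve_left (sub_ne_zero.2 hj)

/-- Parseval: `A` contracts `f` by `lam` if `f` only has components along eigenvectors whose
eigenvalue is at most `lam` in absolute value. -/
theorem sq_mulVec_le {A : Matrix V V ℝ} (hA : A.IsHermitian) {lam : ℝ} {f : V → ℝ}
    (h : ∀ j, |hA.eigenvalues j| ≤ lam ∨ ∑ v, hA.eigenvectorBasis j v * f v = 0) :
    ∑ v, (A *ᵥ f) v ^ 2 ≤ lam ^ 2 * ∑ v, f v ^ 2 := by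
  have parseval : ∀ g : V → ℝ,
      ∑ j, (∑ v, hA.eigenvectorBasis j v * g v) ^ 2 = ∑ v, g v ^ 2 := by
    intro g
    have h := hA.eigenvectorBasis.sum_sq_norm_inner_right (WithLp.toLp 2 g)
    rw [EuclideanSpace.norm_sq_eq] at h
    simpa [PiLp.inner_apply, mul_comm] using h
  have hcoef : ∀ j, ∑ v, hA.eigenvectorBasis j v * (A *ᵥ f) v
      = hA.eigenvalues j * ∑ v, hA.eigenvectorBasis j v * f v := by
    intro j
    have h := Matrix.dotProduct_mulVec (⇑(hA.eigenvectorBasis j)) A f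
    rw [← Matrix.mulVec_transpose, show Aᵀ = A from hA, hA.mulVec_eigenvectorBasis] at h
    simpa [dotProduct, mul_sum, mul_assoc] using h
  rw [← parseval, ← parseval f, mul_sum]
  refine sum_le_sum fun j _ => ?_
  rw [hcoef, mul_pow]
  rcases h j with h | h
  · exact mul_le_mul_of_nonneg_right (sq_le_sq.2 (h.trans (le_abs_self _))) (sq_nonneg _)
  · simp [h]

/-- Otherwise every eigenvector would be orthogonal to the all-ones vector, which would then be zero. -/
theorem exists_eigenvalue_eq [Nonempty V] (hreg : G.IsRegularOfDegree k)
    (hA : (G.adjMatrix ℝ).IsHermitian) : ∃ j, hA.eigenvalues j = k := by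
  by_contra! h
  have h1 := hA.eigenvectorBasis.sum_sq_norm_inner_right (WithLp.toLp 2 fun _ => (1 : ℝ))
  rw [EuclideanSpace.norm_sq_eq] at h1
  simp [PiLp.inner_apply, sum_eigenvector_eq_zero G hreg hA (h _)] at h1
  exact Fintype.card_ne_zero (by exact_mod_cast h1.symm)

/-- No connectedness is needed: if `k` is a multiple eigenvalue, then `k ≤ lam` and the bound holds
for all `f`; otherwise the eigenvector of index `0` is proportional to the all-ones vector. -/
theorem spectral_gap [Nonempty V] (hreg : G.IsRegularOfDegree k) {n : ℕ} [NeZero n]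
    (hn : Fintype.card V = n) {μ : Fin n → ℝ} (hsort : Antitone μ)
    (hchar : (G.adjMatrix ℝ).charpoly = ∏ i : Fin n, (Polynomial.X - Polynomial.C (μ i)))
    {lam : ℝ} (hlam : ∀ i : Fin n, i ≠ 0 → |μ i| ≤ lam) {f : V → ℝ} (hf : ∑ v, f v = 0) :
    ∑ v, (G.adjMatrix ℝ *ᵥ f) v ^ 2 ≤ lam ^ 2 * ∑ v, f v ^ 2 := by
  have hA : (G.adjMatrix ℝ).IsHermitian := by
    rw [Matrix.IsHermitian, Matrix.conjTranspose_eq_transpose_of_trivial]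
    exact G.transpose_adjMatrix
  obtain ⟨σ, hσ⟩ := eigenvalues_eq_sorted hA hn hsort hchar
  refine sq_mulVec_le hA fun j => ?_
  -- If `lam < k`, then `k` is a simple eigenvalue.
  rcases le_or_gt (k : ℝ) lam with hk | hk
  · exact Or.inl ((abs_eigenvalues_le G hreg hA j).trans hk)
  by_cases hj : σ j = 0
  · right
    have hz : ∀ i, i ≠ j → ∑ v, hA.eigenvectorBasis i v = 0 := by
      intro i hi
      refine sum_eigenvector_eq_zero G hreg hA fun h => ?_
      have := hlam (σ i) fun h0 => hi (σ.injective (h0.trans hj.symm))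
      rw [← hσ, h] at this
      linarith [le_abs_self (k : ℝ)]
    -- In the eigenbasis, `⟪f, 1⟫ = ⟪f, b_j⟫ ⟪b_j, 1⟫` and `‖1‖² = ⟪b_j, 1⟫²`.
    have key := hA.eigenvectorBasis.sum_inner_mul_inner (WithLp.toLp 2 f)
      (WithLp.toLp 2 fun _ => (1 : ℝ))
    have one := hA.eigenvectorBasis.sum_sq_norm_inner_right (WithLp.toLp 2 fun _ => (1 : ℝ))
    rw [EuclideanSpace.norm_sq_eq] at one
    simp only [PiLp.inner_apply, RCLike.inner_apply, conj_trivial, one_mul, hf] at key one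
    rw [Finset.sum_eq_single j (fun i _ hi => by rw [hz i hi]; simp) (by simp)] at key one
    rcases mul_eq_zero.1 key with h | h
    · exact h
    · rw [h] at one
      simp at one
      exact absurd (by exact_mod_cast one.symm) (Fintype.card_ne_zero (α := V))
  · left
    rw [hσ]
    exact hlam _ hj

/-- The degree is positive by connectedness, and `lam` is positive because the trace is `0`. -/
theorem lam_pos (hconn : G.Connected) (hreg : G.IsRegularOfDegree k) {n : ℕ} [NeZero n]
    (hn : Fintype.card V = n) (hn2 : 2 ≤ n) {μ : Fin n → ℝ} (hsort : Antitone μ)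
    (hchar : (G.adjMatrix ℝ).charpoly = ∏ i : Fin n, (Polynomial.X - Polynomial.C (μ i)))
    {lam : ℝ} (hlam : ∀ i : Fin n, i ≠ 0 → |μ i| ≤ lam) : 0 < k ∧ 0 < lam := by
  have hA : (G.adjMatrix ℝ).IsHermitian := by
    rw [Matrix.IsHermitian, Matrix.conjTranspose_eq_transpose_of_trivial]
    exact G.transpose_adjMatrix
  obtain ⟨σ, hσ⟩ := eigenvalues_eq_sorted hA hn hsort hchar
  have : Nontrivial V := Fintype.one_lt_card_iff_nontrivial.1 (by omega)
  have : Nonempty V := hconn.nonempty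
  have hk : 0 < k := by
    obtain ⟨v⟩ := hconn.nonempty
    rw [← hreg v]
    exact hconn.preconnected.degree_pos_of_nontrivial v
  refine ⟨hk, ?_⟩
  by_contra! hneg
  obtain ⟨j, hj⟩ := exists_eigenvalue_eq G hreg hA
  have hμ : ∀ i : Fin n, i ≠ 0 → μ i = 0 := fun i hi =>
    abs_nonpos_iff.1 ((hlam i hi).trans hneg)
  have htr : ∑ i, μ i = 0 := by
    have h := hA.trace_eq_sum_eigenvalues
    rw [SimpleGraph.trace_adjMatrix] at h
    simp only [hσ] at h
    rw [← Equiv.sum_comp σ]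
    exact_mod_cast h.symm
  rw [Finset.sum_eq_single 0 (fun i _ hi => hμ i hi) (by simp)] at htr
  have h0 : hA.eigenvalues j = 0 := by
    rw [hσ]
    by_cases h : σ j = 0
    · rw [h, htr]
    · exact hμ _ h
  rw [hj] at h0
  exact hk.ne' (by exact_mod_cast h0)
end

section
variable {V : Type*} [Fintype V] [DecidableEq V] (G : SimpleGraph V) [DecidableRel G.Adj] {k : ℕ}

/-! ### Isoperimetry -/

/-- Tanner-type isoperimetric inequality, multiplied out by `lam ^ 2`. -/
theorem card_mul_le_of_no_edges [Nonempty V] (hreg : G.IsRegularOfDegree k) {lam : ℝ}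
    (hgap : ∀ f : V → ℝ, ∑ v, f v = 0 →
      ∑ v, (G.adjMatrix ℝ *ᵥ f) v ^ 2 ≤ lam ^ 2 * ∑ v, f v ^ 2)
    {X Y : Finset V} (hXY : ∀ x ∈ X, ∀ y ∈ Y, ¬ G.Adj x y) :
    (#Y : ℝ) * (lam ^ 2 * Fintype.card V + k ^ 2 * #X) ≤ lam ^ 2 * (Fintype.card V : ℝ) ^ 2 := by
  set n : ℝ := (Fintype.card V : ℝ) with hn
  have hn0 : 0 < n := by rw [hn]; exact_mod_cast Fintype.card_pos
  have hYn : (#Y : ℝ) ≤ n := by rw [hn]; exact_mod_cast card_le_univ Y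
  rcases X.eq_empty_or_nonempty with rfl | hX
  · simp only [card_empty, Nat.cast_zero, mul_zero, add_zero]
    nlinarith [mul_le_mul_of_nonneg_right hYn (mul_nonneg (sq_nonneg lam) hn0.le)]
  have hx0 : (0 : ℝ) < #X := by exact_mod_cast hX.card_pos
  set x : ℝ := (#X : ℝ) with hx
  set y : ℝ := (#Y : ℝ) with hy
  let u : V → ℝ := fun v => if v ∈ X then 1 else 0
  set w := G.adjMatrix ℝ *ᵥ u with hw
  have hu : ∑ v, u v = x := by simp [u, hx]
  have hu2 : ∑ v, u v ^ 2 = x := by simp [u, hx]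
  have hwsum : ∑ v, w v = k * x := by rw [hw, sum_mulVec G hreg, hu]
  have hwY : ∀ v ∈ Y, w v = 0 := by
    intro v hv
    rw [hw, SimpleGraph.adjMatrix_mulVec_apply]
    refine sum_eq_zero fun z hz => ?_
    rw [SimpleGraph.mem_neighborFinset] at hz
    exact if_neg fun hzX => hXY z hzX v hv hz.symm
  have hCS : (k * x) ^ 2 ≤ (n - y) * ∑ v, w v ^ 2 := by
    have h1 : ∑ v ∈ Yᶜ, w v = k * x := by
      rw [← hwsum]
      exact sum_subset (subset_univ _) fun v _ hv => hwY v (by simpa using hv)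
    have h2 : ∑ v ∈ Yᶜ, w v ^ 2 ≤ ∑ v, w v ^ 2 :=
      sum_le_sum_of_subset_of_nonneg (subset_univ _) fun _ _ _ => sq_nonneg _
    have h3 : ((#Yᶜ : ℕ) : ℝ) = n - y := by
      rw [card_compl, Nat.cast_sub (card_le_univ Y)]
    calc (k * x) ^ 2 = (∑ v ∈ Yᶜ, w v) ^ 2 := by rw [h1]
      _ ≤ #Yᶜ * ∑ v ∈ Yᶜ, w v ^ 2 := sq_sum_le_card_mul_sum_sq
      _ ≤ _ := by rw [h3]; exact mul_le_mul_of_nonneg_left h2 (by linarith)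
  -- Test function: the indicator of `X` projected orthogonally to the constants.
  have hg := hgap (fun v => u v - x / n) (by
    rw [sum_sub_distrib, hu, sum_const, card_univ, nsmul_eq_mul, ← hn]; field_simp; ring)
  have hAf : ∀ v, (G.adjMatrix ℝ *ᵥ fun v => u v - x / n) v = w v - k * x / n := by
    intro v
    have h := SimpleGraph.adjMatrix_mulVec_const_apply_of_regular (α := ℝ) (a := x / n) (v := v) hreg
    have : (fun v => u v - x / n) = u - Function.const V (x / n) := rfl
    rw [this, mulVec_sub, Pi.sub_apply, h, mul_div_assoc]
  simp only [hAf, sub_sq, sum_add_distrib, sum_sub_distrib, ← sum_mul, ← mul_sum, hwsum, hu, hu2,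
    sum_const, card_univ, nsmul_eq_mul, ← hn] at hg
  set W := ∑ v, w v ^ 2
  have e1 : W - 2 * (k * x) * (k * x / n) + n * (k * x / n) ^ 2 = W - (k * x) ^ 2 / n := by
    field_simp; ring
  have e2 : x - 2 * x * (x / n) + n * (x / n) ^ 2 = x - x ^ 2 / n := by
    field_simp; ring
  rw [e1, e2] at hg
  have hW : n * W ≤ (k * x) ^ 2 + lam ^ 2 * (n * x - x ^ 2) := by
    have h := mul_le_mul_of_nonneg_left hg hn0.le
    have e3 : n * (W - (k * x) ^ 2 / n) = n * W - (k * x) ^ 2 := by field_simp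
    have e4 : n * (lam ^ 2 * (x - x ^ 2 / n)) = lam ^ 2 * (n * x - x ^ 2) := by field_simp
    rw [e3, e4] at h
    linarith
  have hmain : x * (n * k ^ 2 * x) ≤ x * ((n - y) * (k ^ 2 * x + lam ^ 2 * (n - x))) := by
    have h1 := mul_le_mul_of_nonneg_left hCS hn0.le
    have h2 := mul_le_mul_of_nonneg_left hW (sub_nonneg.2 hYn)
    nlinarith
  have h := le_of_mul_le_mul_left hmain hx0
  have : 0 ≤ (n - y) * (lam ^ 2 * x) := by
    have := sub_nonneg.2 hYn
    positivity
  nlinarith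
end

/-! ### Summing over ranks -/

/-- Ties in `r` only increase the ranks, hence decrease the left-hand side. -/
theorem sum_rank_le {ι : Type*} [DecidableEq ι] (r : ι → ℝ) {g : ℕ → ℝ} (hg : Antitone g)
    (S : Finset ι) : ∑ u ∈ S, g (#{w ∈ S | r w ≤ r u}) ≤ ∑ i ∈ range #S, g (i + 1) := by
  induction S using induction_on_max_value r with
  | empty => simp
  | insert a s ha hmax ih =>
    rw [sum_insert ha, card_insert_of_notMem ha, sum_range_succ, add_comm]
    refine add_le_add ((sum_le_sum fun u _ => hg (card_le_card ?_)).trans ih) (le_of_eq ?_)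
    · exact filter_subset_filter _ (subset_insert _ _)
    · rw [filter_true_of_mem, card_insert_of_notMem ha]
      intro w hw
      rcases mem_insert.1 hw with rfl | hw
      · exact le_rfl
      · exact hmax w hw

/-- Each term is at most an increment of `x ↦ log (n + ρ x)`, by `1 - t⁻¹ ≤ log t`. -/
theorem sum_div_le_log {n : ℕ} (hn : 0 < n) {ρ : ℝ} (hρ : 0 ≤ ρ) :
    ∑ i ∈ range n, ρ / (n + ρ * (i + 1 : ℕ)) ≤ Real.log (1 + ρ) := by
  have hn' : (0 : ℝ) < n := by exact_mod_cast hn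
  have hpos : ∀ i : ℕ, 0 < (n : ℝ) + ρ * i := fun i => by positivity
  calc ∑ i ∈ range n, ρ / (n + ρ * (i + 1 : ℕ))
      ≤ ∑ i ∈ range n, (Real.log (n + ρ * (i + 1 : ℕ)) - Real.log (n + ρ * i)) := by
        refine sum_le_sum fun i _ => ?_
        have h := Real.one_sub_inv_le_log_of_pos (div_pos (hpos (i + 1)) (hpos i))
        rw [Real.log_div (hpos _).ne' (hpos _).ne', inv_div] at h
        refine le_trans (le_of_eq ?_) h
        have := (hpos (i + 1)).ne'
        field_simp
        push_cast
        ring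
    _ = Real.log (1 + ρ) := by
        rw [sum_range_sub (fun i : ℕ => Real.log (n + ρ * i)), Nat.cast_zero, mul_zero, add_zero,
          ← Real.log_div (hpos n).ne' hn'.ne']
        congr 1
        field_simp

/-! ### Interval graphs and boxicity -/

/-- The infimum defining `boxicity` ranges over a nonempty set, hence is attained: `G` is the
intersection, over its non-edges, of the complete graph minus that one edge, which is an interval
graph. -/
theorem exists_boxicity_rep {V : Type*} [Finite V] (G : SimpleGraph V) :
    ∃ I : Fin (boxicity G) → SimpleGraph V, (∀ i, IsIntervalGraph (I i)) ∧ G = ⨅ i, I i := by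
  classical
  have hne : {m : ℕ | ∃ I : Fin m → SimpleGraph V,
      (∀ i, IsIntervalGraph (I i)) ∧ G = ⨅ i, I i}.Nonempty := by
    let P := {p : V × V // p.1 ≠ p.2 ∧ ¬ G.Adj p.1 p.2}
    obtain ⟨m, ⟨e⟩⟩ := Finite.exists_equiv_fin P
    -- For the non-edge `(a, b)`: `a ↦ [0, 0]`, `b ↦ [1, 1]`, and every other vertex `↦ [0, 1]`.
    let f : P → V → Set ℝ := fun p v =>
      Set.Icc (if v = p.1.2 then 1 else 0) (if v = p.1.1 then 0 else 1)
    have hadj : ∀ (p : P) (u v : V), (f p u ∩ f p v).Nonempty ↔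
        ¬ (u = p.1.1 ∧ v = p.1.2) ∧ ¬ (u = p.1.2 ∧ v = p.1.1) := by
      rintro ⟨⟨a, b⟩, hab, -⟩ u v
      simp only at hab
      simp only [f, Set.Icc_inter_Icc, Set.nonempty_Icc]
      have hba : b ≠ a := fun h => hab h.symm
      by_cases h1 : u = a
      · subst h1
        by_cases h3 : v = u
        · subst h3; simp [hab]
        · by_cases h4 : v = b <;> simp [h3, h4, hab, hba]
      · by_cases h2 : u = b
        · subst h2
          by_cases h3 : v = u
          · subst h3; simp [hba]
          · by_cases h4 : v = a <;> simp [h3, h4, hab, hba]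
        · by_cases h3 : v = a
          · subst h3; simp [h1, h2, hab]
          · by_cases h4 : v = b <;> simp [h1, h2, h3, h4, hba]
    refine ⟨m, fun i => SimpleGraph.mk (fun u v => u ≠ v ∧ (f (e.symm i) u ∩ f (e.symm i) v).Nonempty)
      ⟨fun u v h => ⟨h.1.symm, by rw [Set.inter_comm]; exact h.2⟩⟩ ⟨fun u h => h.1 rfl⟩, ?_, ?_⟩
    · intro i
      refine ⟨f (e.symm i), fun v => ⟨_, _, ?_, rfl⟩, fun u v huv => by simp [huv]⟩
      have := (e.symm i).2.1
      split_ifs with h1 h2 <;> simp_all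
    · ext u v
      simp only [SimpleGraph.iInf_adj, hadj]
      constructor
      · intro h
        refine ⟨fun i => ⟨h.ne, ?_, ?_⟩, h.ne⟩
        · rintro ⟨rfl, rfl⟩; exact (e.symm i).2.2 h
        · rintro ⟨rfl, rfl⟩; exact (e.symm i).2.2 h.symm
      · rintro ⟨h, huv⟩
        by_contra hn
        have := (h (e ⟨(u, v), huv, hn⟩)).2.1
        simp at this
  exact Nat.sInf_mem hne

section
variable {V : Type*} [Fintype V] [DecidableEq V] (G : SimpleGraph V) [DecidableRel G.Adj] {k : ℕ}

omit [DecidableRel G.Adj] in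
/-- An interval supergraph of `G` has few non-adjacent ordered pairs, under the isoperimetric
inequality `hexp` for `G`. -/
theorem card_nonadj_interval_le [Nonempty V] {I : SimpleGraph V} [DecidableRel I.Adj]
    (hI : IsIntervalGraph I) (hGI : G ≤ I) {ρ : ℝ} (hρ : 0 < ρ)
    (hexp : ∀ X Y : Finset V, (∀ x ∈ X, ∀ y ∈ Y, ¬ G.Adj x y) →
      (#Y : ℝ) * (Fintype.card V + ρ * #X) ≤ (Fintype.card V : ℝ) ^ 2) :
    (#{p : V × V | p.1 ≠ p.2 ∧ ¬ I.Adj p.1 p.2} : ℝ) * ρ ≤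
      2 * ((Fintype.card V : ℝ) ^ 2 * Real.log (1 + ρ)) := by
  obtain ⟨f, hf, hfI⟩ := hI
  choose l r hlr hf using hf
  set n := Fintype.card V with hn
  have hn0 : 0 < n := Fintype.card_pos
  have hn0' : (0 : ℝ) < n := by exact_mod_cast hn0
  have hdisj : ∀ u v, u ≠ v → (¬ I.Adj u v ↔ r u < l v ∨ r v < l u) := by
    intro u v huv
    rw [hfI u v huv, hf, hf, Set.Icc_inter_Icc, Set.nonempty_Icc]
    simp only [sup_le_iff, le_inf_iff, not_and_or, not_le]
    have := hlr u
    have := hlr v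
    constructor
    · rintro ((h | h) | (h | h))
      · linarith
      · exact Or.inl h
      · exact Or.inr h
      · linarith
    · rintro (h | h)
      · exact Or.inl (Or.inr h)
      · exact Or.inr (Or.inl h)
  set N := #{p : V × V | r p.1 < l p.2} with hN
  have hN' : #{p : V × V | r p.2 < l p.1} = N := by
    refine card_equiv (Equiv.prodComm V V) fun p => by simp
  have h2N : #{p : V × V | p.1 ≠ p.2 ∧ ¬ I.Adj p.1 p.2} ≤ 2 * N := by
    calc _ ≤ #(({p : V × V | r p.1 < l p.2} : Finset (V × V)) ∪
          ({p : V × V | r p.2 < l p.1} : Finset (V × V))) := by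
          refine card_le_card fun p hp => ?_
          simp only [mem_filter, mem_univ, true_and, mem_union] at hp ⊢
          exact (hdisj _ _ hp.1).1 hp.2
      _ ≤ _ := card_union_le _ _
      _ = 2 * N := by rw [hN', two_mul]
  have hcount : N = ∑ u, #{v | r u < l v} := by
    simp only [hN, card_filter]
    rw [Fintype.sum_prod_type]
  have hanti : Antitone fun i : ℕ => ρ / (n + ρ * i) := by
    intro i j hij
    have : (i : ℝ) ≤ j := by exact_mod_cast hij
    dsimp only
    gcongr
  have hterm : ∀ u, (#{v | r u < l v} : ℝ) * ρ ≤
      (n : ℝ) ^ 2 * (ρ / (n + ρ * (#{w | r w ≤ r u} : ℕ))) := by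
    intro u
    have h := hexp {w | r w ≤ r u} {v | r u < l v} (by
      intro x hx y hy hxy
      simp only [mem_filter, mem_univ, true_and] at hx hy
      exact (hdisj x y hxy.ne).2 (Or.inl (hx.trans_lt hy)) (hGI hxy))
    rw [mul_div_assoc', le_div_iff₀ (by positivity)]
    nlinarith
  have hNle : (N : ℝ) * ρ ≤ (n : ℝ) ^ 2 * Real.log (1 + ρ) := by
    rw [hcount, Nat.cast_sum, sum_mul]
    refine (sum_le_sum fun u _ => hterm u).trans ?_
    rw [← mul_sum]
    refine mul_le_mul_of_nonneg_left ?_ (by positivity)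
    refine (sum_rank_le r hanti univ).trans ?_
    rw [card_univ]
    exact sum_div_le_log hn0 hρ.le
  have : (#{p : V × V | p.1 ≠ p.2 ∧ ¬ I.Adj p.1 p.2} : ℝ) ≤ 2 * N := by exact_mod_cast h2N
  nlinarith

theorem card_nonadj_eq (hreg : G.IsRegularOfDegree k) :
    (#{p : V × V | p.1 ≠ p.2 ∧ ¬ G.Adj p.1 p.2} : ℝ) =
      Fintype.card V * ((Fintype.card V : ℝ) - k - 1) := by
  have h : ∀ u, (#{v | u ≠ v ∧ ¬ G.Adj u v} : ℝ) = (Fintype.card V : ℝ) - k - 1 := by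
    intro u
    have h1 : ({v | u ≠ v ∧ ¬ G.Adj u v} : Finset V) = (insert u (G.neighborFinset u))ᶜ := by
      ext v; simp [eq_comm]
    have h2 : #(insert u (G.neighborFinset u)) = k + 1 := by
      rw [card_insert_of_notMem (by simp), G.card_neighborFinset_eq_degree, hreg u]
    rw [h1, card_compl, Nat.cast_sub (card_le_univ _), h2]
    push_cast; ring
  have hcount : #{p : V × V | p.1 ≠ p.2 ∧ ¬ G.Adj p.1 p.2} = ∑ u, #{v | u ≠ v ∧ ¬ G.Adj u v} := by
    simp only [card_filter]
    rw [Fintype.sum_prod_type]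
  rw [hcount, Nat.cast_sum, sum_congr rfl fun u _ => h u, sum_const, card_univ, nsmul_eq_mul]

theorem nonadj_le_boxicity_mul [Nonempty V] (hreg : G.IsRegularOfDegree k) {ρ : ℝ} (hρ : 0 < ρ)
    (hexp : ∀ X Y : Finset V, (∀ x ∈ X, ∀ y ∈ Y, ¬ G.Adj x y) →
      (#Y : ℝ) * (Fintype.card V + ρ * #X) ≤ (Fintype.card V : ℝ) ^ 2) :
    Fintype.card V * ((Fintype.card V : ℝ) - k - 1) * ρ ≤
      boxicity G * (2 * ((Fintype.card V : ℝ) ^ 2 * Real.log (1 + ρ))) := by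
  classical
  obtain ⟨I, hI, hG⟩ := exists_boxicity_rep G
  have hGI : ∀ i, G ≤ I i := fun i => hG.le.trans (iInf_le I i)
  have hcover : #{p : V × V | p.1 ≠ p.2 ∧ ¬ G.Adj p.1 p.2} ≤
      ∑ i, #{p : V × V | p.1 ≠ p.2 ∧ ¬ (I i).Adj p.1 p.2} := by
    refine le_trans (card_le_card fun p hp => ?_) card_biUnion_le
    simp only [mem_filter, mem_univ, true_and, mem_biUnion] at hp ⊢
    by_contra! h
    refine hp.2 ?_
    rw [hG, SimpleGraph.iInf_adj]
    exact ⟨fun i => h i hp.1, hp.1⟩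
  rw [← card_nonadj_eq G hreg]
  calc (#{p : V × V | p.1 ≠ p.2 ∧ ¬ G.Adj p.1 p.2} : ℝ) * ρ
      ≤ (∑ i, (#{p : V × V | p.1 ≠ p.2 ∧ ¬ (I i).Adj p.1 p.2} : ℝ)) * ρ :=
        mul_le_mul_of_nonneg_right (by exact_mod_cast hcover) hρ.le
    _ ≤ ∑ _i : Fin (boxicity G), 2 * ((Fintype.card V : ℝ) ^ 2 * Real.log (1 + ρ)) := by
        rw [sum_mul]
        exact sum_le_sum fun i _ => card_nonadj_interval_le G (hI i) (hGI i) hρ hexp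
    _ = _ := by simp
end

end Auxiliary

theorem box_spectral_lower_bound {V : Type*} [Fintype V] [DecidableEq V]
    (G : SimpleGraph V) [DecidableRel G.Adj] (n k : ℕ)
    (hn : Fintype.card V = n) (hn2 : 2 ≤ n)
    (hconn : G.Connected) (hreg : G.IsRegularOfDegree k)
    (μ : Fin n → ℝ) (hsort : Antitone μ)
    (hchar : (G.adjMatrix ℝ).charpoly =
      ∏ i : Fin n, (Polynomial.X - Polynomial.C (μ i)))
    (lam : ℝ)
    (hlam : lam = sSup {x : ℝ | ∃ i : Fin n, 1 ≤ (i : ℕ) ∧ x = |μ i|}) :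
    0 < lam ∧
    (boxicity G : ℝ) ≥
      (((k : ℝ) ^ 2 / lam ^ 2) / Real.log (1 + (k : ℝ) ^ 2 / lam ^ 2)) *
        (((n : ℝ) - (k : ℝ) - 1) / (2 * (n : ℝ))) := by
  have : NeZero n := ⟨by omega⟩
  have : Nonempty V := hconn.nonempty
  have hbound : ∀ i : Fin n, i ≠ 0 → |μ i| ≤ lam := by
    intro i hi
    rw [hlam]
    refine le_csSup ?_ ⟨i, ?_, rfl⟩
    · refine ((Set.finite_range fun i => |μ i|).subset ?_).bddAbove
      rintro x ⟨i, -, rfl⟩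
      exact ⟨i, rfl⟩
    · exact Nat.one_le_iff_ne_zero.2 fun h => hi (Fin.ext h)
  obtain ⟨hk, hpos⟩ := lam_pos G hconn hreg hn hn2 hsort hchar hbound
  refine ⟨hpos, ?_⟩
  set ρ : ℝ := (k : ℝ) ^ 2 / lam ^ 2 with hρ
  have hk' : (0 : ℝ) < k := by exact_mod_cast hk
  have hρ0 : 0 < ρ := by positivity
  have hn0 : (0 : ℝ) < n := by exact_mod_cast (by omega : 0 < n)
  have hlog : 0 < Real.log (1 + ρ) := Real.log_pos (by linarith)
  have hkρ : (k : ℝ) ^ 2 = lam ^ 2 * ρ := by rw [hρ]; field_simp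
  have h := nonadj_le_boxicity_mul G hreg hρ0 (by
    intro X Y hXY
    have h := card_mul_le_of_no_edges G hreg
      (fun f hf => spectral_gap G hreg hn hsort hchar hbound hf) hXY
    rw [hkρ] at h
    refine le_of_mul_le_mul_left ?_ (pow_pos hpos 2)
    linarith)
  rw [hn] at h
  rw [ge_iff_le, div_mul_div_comm, div_le_iff₀ (by positivity)]
  refine le_of_mul_le_mul_left ?_ hn0
  linarith
end

section
/- Let G be a non-complete graph on n vertices with maximum degree Δ and minimum degree δ (so n − δ − 1 ≥ 1), and let t be a positive integer with t ≤ n. Then α_t(V, V) ≥ (n − Δ − 1)/(n − δ − 1). -/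
/-!
Double counting of the edges of `Gᶜ` between a `t`-set `S` and its `Gᶜ`-neighbourhood `N`: every
vertex of `S` sends all of its at least `n - 1 - Δ` complement edges into `N`, while every vertex
of `N` receives at most `n - 1 - δ` of them. Hence `t * (n - 1 - Δ) ≤ |N| * (n - 1 - δ)`, which is
`card_mul_le_ncard_mul`; the bound follows by applying it to a set `S` attaining the minimum.
-/

/-- The co-expansion coefficient `α_t(A,B)`:
`(1/t) · min_{S ⊆ A, |S| = t} |N'(S, Ḡ) ∩ B|`. -/
noncomputable def coexp {V : Type*} (G : SimpleGraph V) (A B : Finset V) (t : ℕ) : ℝ :=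
  (sInf {m : ℕ | ∃ S : Finset V, S ⊆ A ∧ S.card = t ∧
    ({b : V | b ∈ B ∧ ∃ a ∈ S, Gᶜ.Adj a b}).ncard = m} : ℕ) / (t : ℝ)

theorem card_mul_le_ncard_mul {V : Type*} [Fintype V] [DecidableEq V]
    (G : SimpleGraph V) [DecidableRel G.Adj] (S : Finset V) :
    S.card * (Fintype.card V - 1 - G.maxDegree) ≤
      ({b : V | b ∈ (Finset.univ : Finset V) ∧ ∃ a ∈ S, Gᶜ.Adj a b}).ncard *
        (Fintype.card V - 1 - G.minDegree) := by
  have hN : {b : V | b ∈ (Finset.univ : Finset V) ∧ ∃ a ∈ S, Gᶜ.Adj a b} =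
      ((Finset.univ.filter fun b => ∃ a ∈ S, Gᶜ.Adj a b : Finset V) : Set V) := by
    ext b; simp
  rw [hN, Set.ncard_coe_finset]
  refine Finset.card_mul_le_card_mul Gᶜ.Adj (fun a ha => ?_) (fun b _ => ?_)
  · have h : Gᶜ.neighborFinset a ⊆ Finset.bipartiteAbove Gᶜ.Adj
        (Finset.univ.filter fun b => ∃ a ∈ S, Gᶜ.Adj a b) a := by
      intro b hb
      rw [SimpleGraph.mem_neighborFinset] at hb
      exact Finset.mem_filter.2 ⟨Finset.mem_filter.2 ⟨Finset.mem_univ _, a, ha, hb⟩, hb⟩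
    have h1 := Finset.card_le_card h
    rw [SimpleGraph.card_neighborFinset_eq_degree, SimpleGraph.degree_compl] at h1
    have := G.degree_le_maxDegree a
    omega
  · have h : Finset.bipartiteBelow Gᶜ.Adj S b ⊆ Gᶜ.neighborFinset b := by
      intro a ha
      rw [SimpleGraph.mem_neighborFinset]
      exact (Finset.mem_filter.1 ha).2.symm
    have h1 := Finset.card_le_card h
    rw [SimpleGraph.card_neighborFinset_eq_degree, SimpleGraph.degree_compl] at h1
    have := G.minDegree_le_degree b
    omega

theorem coexp_lower_bound_general {V : Type*} [Fintype V] [DecidableEq V]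
    (G : SimpleGraph V) [DecidableRel G.Adj] (hG : G ≠ ⊤)
    (t : ℕ) (ht1 : 1 ≤ t) (ht2 : t ≤ Fintype.card V) :
    coexp G Finset.univ Finset.univ t ≥
      ((Fintype.card V : ℝ) - G.maxDegree - 1) /
        ((Fintype.card V : ℝ) - G.minDegree - 1) := by
  have : Nonempty V := Fintype.card_pos_iff.1 (by omega)
  have hmax : G.maxDegree + 1 ≤ Fintype.card V := G.maxDegree_lt_card_verts
  have hmin : G.minDegree + 1 ≤ Fintype.card V :=
    (Nat.succ_le_succ G.minDegree_le_maxDegree).trans hmax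
  unfold coexp
  -- The infimum is over a nonempty set of naturals, so it is attained by some `S`.
  have hne : {m : ℕ | ∃ S : Finset V, S ⊆ Finset.univ ∧ S.card = t ∧
      ({b : V | b ∈ (Finset.univ : Finset V) ∧ ∃ a ∈ S, Gᶜ.Adj a b}).ncard = m}.Nonempty := by
    obtain ⟨S, hS, hSt⟩ := Finset.exists_subset_card_eq (s := (Finset.univ : Finset V)) ht2
    exact ⟨_, S, hS, hSt, rfl⟩
  obtain ⟨S, -, hSt, hS⟩ := Nat.sInf_mem hne
  have key := card_mul_le_ncard_mul G S
  rw [hS, hSt] at key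
  have key' := (Nat.cast_le (α := ℝ)).2 key
  rw [Nat.sub_sub, Nat.sub_sub, Nat.cast_mul, Nat.cast_mul, Nat.cast_sub (by omega),
    Nat.cast_sub (by omega)] at key'
  push_cast at key'
  have ht : (0 : ℝ) < t := by exact_mod_cast ht1
  have hmin' : (G.minDegree : ℝ) + 1 ≤ Fintype.card V := by exact_mod_cast hmin
  rw [ge_iff_le]
  -- A vanishing denominator makes the quotient `0` by convention, and the bound is then trivial.
  refine div_le_of_le_mul₀ (by linarith) (by positivity) ?_
  rw [div_mul_eq_mul_div, le_div_iff₀ ht]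
  linarith
end
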